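/- arXiv:1402.2371 — 2 statements merged into one kernel-verified Lean document; each statement's English description precedes it below -/
import Mathlib

section
/- Let X ⊆ ℙⁿ(ℝ) be an irreducible nondegenerate real projective variety whose real points are Zariski dense. Let r₀ be the minimum typical rank with respect to X and let r_gen be the generic rank with respect to the complexification X_ℂ = X ⊗ ℂ. Then r₀ = r_gen. -/
/-!
The rank of a vector is controlled by which sums `X + ⋯ + X` are Zariski dense. A nonempty Euclidean
open set of real vectors is Zariski dense in complex space, so it meets the Zariski open set of
vectors of generic rank; hence a typical rank is at least the generic rank. Conversely, as the real
points are dense in `X_ℂ` and translations are Zariski continuous, density of a complex sum is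
inherited by the real one. For the least `k` whose real sum is dense, the shorter sums lie in proper
closed sets, and `k` is typical as soon as the `k`-fold sum contains a Euclidean open set.

So let a polynomial map `f` send a real algebraic set `Y` onto a Zariski dense set. Some minimal
prime `P` over the ideal of `Y` contains no polynomial relation between the components of `f`, so
the coordinate ring `A` of `P` is a domain containing the coordinate ring of the target. In
characteristic zero this extension is smooth outside a hypersurface, and there it is étale over a
polynomial ring: points of `A` are simple roots of a polynomial. A simple real root persists under
small perturbations of the coefficients, so real points of `A` lift over a neighbourhood of their
image. As `P` is a minimal prime over the ideal of the real set `Y`, the points of `Y` on which `P`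
vanishes are dense in the component cut out by `P`, and one of them lies outside the hypersurface.
-/

open MvPolynomial

/-- The zero locus in affine space `σ → F` of a set `I` of polynomials. -/
def zLocus {F : Type*} [CommSemiring F] {σ : Type*} (I : Set (MvPolynomial σ F)) :
    Set (σ → F) :=
  {x | ∀ p ∈ I, eval x p = 0}

/-- A subset of affine space is Zariski closed if it is the zero locus of a set of
polynomials. -/
def IsZClosed {F : Type*} [CommSemiring F] {σ : Type*} (S : Set (σ → F)) : Prop :=
  ∃ I : Set (MvPolynomial σ F), S = zLocus I

/-- Zariski open subsets of affine space. -/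
def IsZOpen {F : Type*} [CommSemiring F] {σ : Type*} (S : Set (σ → F)) : Prop :=
  IsZClosed Sᶜ

/-- Zariski dense subsets of affine space. -/
def IsZDense {F : Type*} [CommSemiring F] {σ : Type*} (S : Set (σ → F)) : Prop :=
  ∀ C : Set (σ → F), IsZClosed C → S ⊆ C → C = Set.univ

/-- Irreducibility with respect to the Zariski topology. -/
def IsZIrreducible {F : Type*} [CommSemiring F] {σ : Type*} (S : Set (σ → F)) : Prop :=
  S.Nonempty ∧ ∀ C₁ C₂ : Set (σ → F), IsZClosed C₁ → IsZClosed C₂ →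
    S ⊆ C₁ ∪ C₂ → (S ⊆ C₁ ∨ S ⊆ C₂)

/-- An affine cone: a subset closed under scalar multiplication. -/
def IsCone {F : Type*} [CommSemiring F] {σ : Type*} (S : Set (σ → F)) : Prop :=
  ∀ (c : F), ∀ x ∈ S, c • x ∈ S

/-- The set of vectors expressible as a sum of exactly `r` elements of `S`. -/
def sumsOf {F : Type*} [CommSemiring F] {σ : Type*} (S : Set (σ → F)) (r : ℕ) :
    Set (σ → F) :=
  {v | ∃ f : Fin r → (σ → F), (∀ i, f i ∈ S) ∧ ∑ i, f i = v}

/-- The `X`-rank of a vector with respect to the affine cone `S`: the least number of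
elements of `S` summing to it (`⊤` if there is no such decomposition). -/
noncomputable def xRank {F : Type*} [CommSemiring F] {σ : Type*} (S : Set (σ → F))
    (v : σ → F) : ℕ∞ :=
  sInf {r : ℕ∞ | ∃ s : ℕ, r = s ∧ v ∈ sumsOf S s}

/-- The Zariski closure of a subset of affine space. -/
def zClosure {F : Type*} [CommSemiring F] {σ : Type*} (S : Set (σ → F)) : Set (σ → F) :=
  ⋂₀ {C : Set (σ → F) | IsZClosed C ∧ S ⊆ C}

/-- The (affine cone over the) `r`-th secant variety: the Zariski closure of the set of
points of `X`-rank at most `r`. -/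
noncomputable def secantCone {F : Type*} [CommSemiring F] {σ : Type*}
    (Xhat : Set (σ → F)) (r : ℕ) : Set (σ → F) :=
  zClosure {v | xRank Xhat v ≤ (r : ℕ∞)}

/-- `r` is a typical rank with respect to the real cone `Xhat` if the set of vectors of
`X`-rank exactly `r` contains a nonempty Euclidean-open subset of `ℝ^{n+1}`. -/
def IsTypicalRank {n : ℕ} (Xhat : Set (Fin (n + 1) → ℝ)) (r : ℕ) : Prop :=
  ∃ U : Set (Fin (n + 1) → ℝ), IsOpen U ∧ U.Nonempty ∧ ∀ v ∈ U, xRank Xhat v = (r : ℕ∞)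

open scoped Pointwise Topology

section Zariski

variable {F σ τ : Type*}

section CommSemiring

variable [CommSemiring F] {S T : Set (σ → F)} {r : ℕ}

/-- The polynomial map `(σ → F) → (τ → F)` of affine spaces whose components are the polynomials
`f`. -/
noncomputable def polyMap (f : τ → MvPolynomial σ F) (x : σ → F) : τ → F :=
  fun a => eval x (f a)

theorem eval_polyMap (f : τ → MvPolynomial σ F) (x : σ → F) (p : MvPolynomial τ F) :
    eval (polyMap f x) p = eval x (bind₁ f p) :=
  (eval₂Hom_bind₁ (RingHom.id F) x f p).symm

theorem IsZClosed.preimage_polyMap {C : Set (τ → F)} (hC : IsZClosed C)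
    (f : τ → MvPolynomial σ F) : IsZClosed (polyMap f ⁻¹' C) := by
  obtain ⟨I, rfl⟩ := hC
  refine ⟨bind₁ f '' I, Set.ext fun x => ?_⟩
  simp only [zLocus, Set.mem_preimage, Set.mem_ofPred_eq, eval_polyMap, Set.forall_mem_image]

theorem IsZClosed.iInter {ι : Type*} {C : ι → Set (σ → F)} (hC : ∀ i, IsZClosed (C i)) :
    IsZClosed (⋂ i, C i) := by
  choose I hI using hC
  refine ⟨⋃ i, I i, Set.ext fun x => ?_⟩
  simp only [hI, zLocus, Set.mem_iInter, Set.mem_ofPred_eq, Set.mem_iUnion, forall_exists_index]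
  exact forall_comm

theorem isZClosed_setOf_eval_eq_zero (p : MvPolynomial σ F) : IsZClosed {x | eval x p = 0} :=
  ⟨{p}, by simp only [zLocus, Set.mem_singleton_iff, forall_eq]⟩

theorem isZClosed_zClosure (S : Set (σ → F)) : IsZClosed (zClosure S) := by
  rw [zClosure, Set.sInter_eq_iInter]
  exact IsZClosed.iInter fun C => C.2.1

theorem subset_zClosure (S : Set (σ → F)) : S ⊆ zClosure S :=
  Set.subset_sInter fun _ hC => hC.2

theorem zClosure_subset {C : Set (σ → F)} (hC : IsZClosed C) (hS : S ⊆ C) : zClosure S ⊆ C :=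
  Set.sInter_subset_of_mem ⟨hC, hS⟩

theorem isZDense_iff_zClosure_eq_univ : IsZDense S ↔ zClosure S = Set.univ :=
  ⟨fun h => h _ (isZClosed_zClosure S) (subset_zClosure S),
    fun h _ hC hS => Set.univ_subset_iff.1 (h ▸ zClosure_subset hC hS)⟩

theorem IsZDense.of_subset_zClosure (hS : IsZDense S) (h : S ⊆ zClosure T) : IsZDense T :=
  fun _ hC hT => hS _ hC (h.trans (zClosure_subset hC hT))

theorem IsZDense.mono (hS : IsZDense S) (h : S ⊆ T) : IsZDense T :=
  hS.of_subset_zClosure (h.trans (subset_zClosure T))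

theorem IsZDense.nonempty [Nontrivial F] (hS : IsZDense S) : S.Nonempty := by
  rw [Set.nonempty_iff_ne_empty]
  rintro rfl
  have h := hS _ (isZClosed_setOf_eval_eq_zero 1) (Set.empty_subset _)
  exact one_ne_zero ((map_one (eval 0)).symm.trans (h.ge (Set.mem_univ (0 : σ → F))))

theorem IsZDense.inter_nonempty_of_isZOpen (hS : IsZDense S) {U : Set (σ → F)}
    (hU : IsZOpen U) (hne : U.Nonempty) : (S ∩ U).Nonempty := by
  rw [Set.inter_nonempty_iff_exists_left]
  by_contra! h
  exact hne.ne_empty (Set.compl_univ_iff.1 (hS _ hU h))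

theorem IsZClosed.preimage_add_right {C : Set (σ → F)} (hC : IsZClosed C) (w : σ → F) :
    IsZClosed ((· + w) ⁻¹' C) := by
  convert hC.preimage_polyMap fun i => X i + MvPolynomial.C (w i) using 2
  ext x i
  simp [polyMap]

theorem zClosure_add_zClosure_subset (S T : Set (σ → F)) :
    zClosure S + zClosure T ⊆ zClosure (S + T) := by
  have hleft : ∀ y ∈ T, ∀ x ∈ zClosure S, x + y ∈ zClosure (S + T) := fun y hy =>
    zClosure_subset ((isZClosed_zClosure _).preimage_add_right y) fun x hx =>
      subset_zClosure _ (Set.add_mem_add hx hy)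
  rintro _ ⟨x, hx, y, hy, rfl⟩
  have hright : T ⊆ (· + x) ⁻¹' zClosure (S + T) := fun y hy =>
    Set.mem_preimage.2 (add_comm x y ▸ hleft y hy x hx)
  change x + y ∈ _
  exact add_comm y x ▸ zClosure_subset ((isZClosed_zClosure _).preimage_add_right x) hright hy

theorem nsmul_zClosure_subset (S : Set (σ → F)) (r : ℕ) :
    r • zClosure S ⊆ zClosure (r • S) := by
  induction r with
  | zero => simpa only [zero_nsmul] using subset_zClosure _
  | succ r ih =>
    simp only [succ_nsmul]
    exact (Set.add_subset_add_right ih).trans (zClosure_add_zClosure_subset _ _)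

theorem sumsOf_eq_nsmul (S : Set (σ → F)) (r : ℕ) : sumsOf S r = r • S := by
  have h : r • S = ∑ _i : Fin r, S := by rw [Finset.sum_const, Finset.card_fin]
  ext v
  simp only [h, sumsOf, Set.mem_fintype_sum, Set.mem_ofPred_eq, exists_prop]

theorem sumsOf_mono (h : S ⊆ T) (r : ℕ) : sumsOf S r ⊆ sumsOf T r :=
  fun _ ⟨f, hf, hsum⟩ => ⟨f, fun i => h (hf i), hsum⟩

theorem xRank_eq_natCast_iff {v : σ → F} :
    xRank S v = r ↔ IsLeast {s | v ∈ sumsOf S s} r := by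
  have himage : {t : ℕ∞ | ∃ s : ℕ, t = s ∧ v ∈ sumsOf S s} =
      Nat.cast '' {s | v ∈ sumsOf S s} := by
    ext t
    simp only [Set.mem_ofPred_eq, Set.mem_image, and_comm, eq_comm]
  have hcast {s : ℕ} (hs : IsLeast {s | v ∈ sumsOf S s} s) : xRank S v = s := by
    rw [xRank, himage]
    exact (Nat.mono_cast.map_isLeast hs).isGLB.sInf_eq
  refine ⟨fun h => ?_, hcast⟩
  have hne : {s | v ∈ sumsOf S s}.Nonempty := by
    by_contra! hempty
    rw [xRank, himage, hempty, Set.image_empty, sInf_empty] at h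
    exact ENat.top_ne_natCast r h
  have hleast := isLeast_csInf hne
  rwa [← Nat.cast_injective ((hcast hleast).symm.trans h)]

theorem IsZDense.sumsOf_of_subset_zClosure (hS : IsZDense (sumsOf S r)) (h : S ⊆ zClosure T) :
    IsZDense (sumsOf T r) := by
  rw [sumsOf_eq_nsmul] at hS ⊢
  exact hS.of_subset_zClosure ((Set.nsmul_subset_nsmul_left h).trans (nsmul_zClosure_subset T r))

theorem image_compLeft_sumsOf {K : Type*} [CommSemiring K] (c : F →+* K) (S : Set (σ → F)) (r : ℕ) :
    c.compLeft σ '' sumsOf S r = sumsOf (c.compLeft σ '' S) r := by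
  rw [sumsOf_eq_nsmul, sumsOf_eq_nsmul, Set.image_nsmul]

theorem preimage_compLeft_zLocus_map {K : Type*} [CommSemiring K] {c : F →+* K}
    (hc : Function.Injective c) (I : Set (MvPolynomial σ F)) :
    c.compLeft σ ⁻¹' zLocus (map c '' I) = zLocus I := by
  ext x
  have heval (p : MvPolynomial σ F) : eval (c.compLeft σ x) (map c p) = c (eval x p) :=
    (map_eval c x p).symm
  simp only [zLocus, Set.mem_preimage, Set.mem_ofPred_eq, Set.forall_mem_image, heval,
    map_eq_zero_iff c hc]

theorem IsZDense.of_image_compLeft {K : Type*} [CommSemiring K] {c : F →+* K}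
    (hc : Function.Injective c) (hS : IsZDense (c.compLeft σ '' S)) : IsZDense S := by
  rintro _ ⟨I, rfl⟩ hSI
  rw [← preimage_compLeft_zLocus_map hc] at hSI ⊢
  rw [hS _ ⟨_, rfl⟩ (Set.image_subset_iff.2 hSI), Set.preimage_univ]

end CommSemiring

section Field

variable [Field F]

theorem IsZClosed.zeroLocus_vanishingIdeal {C : Set (σ → F)} (hC : IsZClosed C) :
    zeroLocus F (vanishingIdeal F C) = C := by
  obtain ⟨I, rfl⟩ := hC
  exact (zeroLocus_vanishingIdeal_le _).antisymm' fun x hx p hp =>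
    hx p (mem_vanishingIdeal_iff.2 fun y hy => hy p hp)

theorem IsZDense.vanishingIdeal_eq_bot [Infinite F] {S : Set (σ → F)} (hS : IsZDense S) :
    vanishingIdeal F S = ⊥ := by
  refine (Submodule.eq_bot_iff _).2 fun p hp => MvPolynomial.funext fun x => ?_
  rw [map_zero]
  exact (hS _ (isZClosed_setOf_eval_eq_zero p) fun y hy => hp y hy).ge (Set.mem_univ x)

theorem comap_vanishingIdeal (f : τ → MvPolynomial σ F) (Y : Set (σ → F)) :
    (vanishingIdeal F Y).comap (bind₁ f) = vanishingIdeal F (polyMap f '' Y) := by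
  ext p
  simp only [Ideal.mem_comap, mem_vanishingIdeal_iff, Set.forall_mem_image, aeval_eq_eval,
    eval_polyMap]

theorem vanishingIdeal_inter_zeroLocus [Finite σ] {Y : Set (σ → F)}
    {P : Ideal (MvPolynomial σ F)} (hP : P ∈ (vanishingIdeal F Y).minimalPrimes) :
    vanishingIdeal F (Y ∩ zeroLocus F P) = P := by
  have hone : (vanishingIdeal F Y).colon {1} = vanishingIdeal F Y := by
    ext p
    rw [Submodule.mem_colon_singleton, smul_eq_mul, mul_one]
  -- `P` consists of the polynomials that vanish on `Y` wherever a suitable `s` does not.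
  obtain ⟨s, hs⟩ : ∃ s, P = (vanishingIdeal F Y).colon {s} :=
    Submodule.exists_eq_colon_of_mem_minimalPrimes (hone.symm ▸ hP)
  have hmem (p : MvPolynomial σ F) : p ∈ P ↔ ∀ y ∈ Y, eval y p * eval y s = 0 := by
    simp [hs, Submodule.mem_colon_singleton]
  refine le_antisymm (fun p hp => (hmem p).2 fun y hy => ?_) fun p hp y hy => hy.2 p hp
  by_cases hys : eval y s = 0
  · rw [hys, mul_zero]
  · have hyP : y ∈ zeroLocus F P := fun q hq =>
      (mul_eq_zero.1 ((hmem q).1 hq y hy)).resolve_right hys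
    exact mul_eq_zero_of_left (hp y ⟨hy, hyP⟩) _

end Field

end Zariski

theorem isZDense_image_compLeft_of_isOpen {σ K : Type*} [Finite σ] [CommRing K] [IsDomain K]
    (c : ℝ →+* K) {U : Set (σ → ℝ)} (hU : IsOpen U) (hne : U.Nonempty) :
    IsZDense (c.compLeft σ '' U) := by
  obtain ⟨x, hx⟩ := hne
  obtain ⟨t, ht, htU⟩ := isOpen_pi_iff'.1 hU x hx
  rintro _ ⟨I, rfl⟩ hUI
  have hzero : ∀ p ∈ I, p = 0 := fun p hp => by
    refine MvPolynomial.funext_set (fun i => c '' t i)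
      (fun i => (infinite_of_mem_nhds (x i) ((ht i).1.mem_nhds (ht i).2)).image
        c.injective.injOn) fun y hy => ?_
    choose z hz hzy using fun i => hy i trivial
    obtain rfl : c.compLeft σ z = y := funext hzy
    rw [map_zero, hUI (Set.mem_image_of_mem _ (htU fun i _ => hz i)) p hp]
  refine Set.eq_univ_of_forall fun x p hp => ?_
  rw [hzero p hp, map_zero]

theorem IsZClosed.isClosed {σ : Type*} {C : Set (σ → ℝ)} (hC : IsZClosed C) : IsClosed C := by
  obtain ⟨I, rfl⟩ := hC
  simp only [zLocus, Set.ofPred_forall]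
  exact isClosed_biInter fun p _ => isClosed_eq (MvPolynomial.continuous_eval p) continuous_const

theorem IsZClosed.dense_compl {σ : Type*} [Finite σ] {C : Set (σ → ℝ)} (hC : IsZClosed C)
    (hne : C ≠ Set.univ) : Dense Cᶜ := by
  rw [← interior_eq_empty_iff_dense_compl]
  by_contra! h
  have hdense : IsZDense (interior C) := by
    simpa [RingHom.compLeft] using
      isZDense_image_compLeft_of_isOpen (RingHom.id ℝ) isOpen_interior h
  exact hne (hdense C hC interior_subset)

theorem isSmoothAt_bot (R A : Type*) [CommRing R] [IsDomain R] [CharZero R] [CommRing A]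
    [IsDomain A] [Algebra R A] [FaithfulSMul R A] [Algebra.FiniteType R A] :
    Algebra.IsSmoothAt R (⊥ : Ideal A) := by
  let K := FractionRing R
  let L := Localization.AtPrime (⊥ : Ideal A)
  have : IsFractionRing A L := by
    have h : (⊥ : Ideal A).primeCompl = nonZeroDivisors A := by
      ext x; simp
    rw [IsFractionRing, ← h]
    infer_instance
  let _ : Field L := IsFractionRing.toField A
  have : FaithfulSMul R L := FaithfulSMul.trans R A L
  let _ : Algebra K L := FractionRing.liftAlgebra R L
  have : IsScalarTower R K L := FractionRing.isScalarTower_liftAlgebra R L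
  have : Algebra.EssFiniteType R L := .comp R A L
  have : Algebra.EssFiniteType K L := .of_comp R K L
  have : CharZero K := IsFractionRing.charZero R
  have : Algebra.FormallySmooth R K := .of_isLocalization (nonZeroDivisors R)
  -- `K` is perfect, so the finitely generated field extension `L` of it is formally smooth.
  exact .comp R K L

section Lifting

variable {W : Type*} [TopologicalSpace W] {w₀ : W}

theorem eventually_exists_eq_zero_of_hasDerivAt {F : W → ℝ → ℝ} {u₀ d : ℝ}
    (hF : ∀ w, Continuous (F w)) (hF' : ∀ u, Continuous fun w => F w u)
    (hderiv : HasDerivAt (F w₀) d u₀) (hd : d ≠ 0) (hzero : F w₀ u₀ = 0) {N : Set ℝ}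
    (hN : N ∈ 𝓝 u₀) : ∀ᶠ w in 𝓝 w₀, ∃ u ∈ N, F w u = 0 := by
  obtain ⟨ε, hε, hεN⟩ := Metric.mem_nhds_iff.1 hN
  have hball := Metric.ball_mem_nhds u₀ hε
  obtain ⟨a, ha, hneg⟩ : ∃ a ∈ Metric.ball u₀ ε, F w₀ a < 0 := by
    by_contra! h
    have hmin : IsLocalMin (F w₀) u₀ := Filter.mem_of_superset hball fun u hu => hzero ▸ h u hu
    exact hd (hmin.hasDerivAt_eq_zero hderiv)
  obtain ⟨b, hb, hpos⟩ : ∃ b ∈ Metric.ball u₀ ε, 0 < F w₀ b := by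
    by_contra! h
    have hmax : IsLocalMax (F w₀) u₀ := Filter.mem_of_superset hball fun u hu => hzero ▸ h u hu
    exact hd (hmax.hasDerivAt_eq_zero hderiv)
  filter_upwards [(hF' a).continuousAt.eventually_lt_const hneg,
    (hF' b).continuousAt.eventually_const_lt hpos] with w hwa hwb
  obtain ⟨u, hu, hzero⟩ := (convex_ball u₀ ε).isPreconnected.intermediate_value ha hb
    (hF w).continuousOn ⟨hwa.le, hwb.le⟩
  exact ⟨u, hεN hu, hzero⟩

variable {B : Type*} [CommRing B] {c : W → B →+* ℝ}

theorem continuous_eval₂_of_forall_continuous (hc : ∀ b, Continuous fun w => c w b)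
    (p : Polynomial B) :
    Continuous fun q : W × ℝ => p.eval₂ (c q.1) q.2 := by
  simp only [Polynomial.eval₂_eq_sum_range]
  exact continuous_finsetSum _ fun i _ =>
    ((hc _).comp continuous_fst).mul (continuous_snd.pow i)

theorem eventually_exists_comp_algebraMap_eq_of_isStandardEtale {S : Type*} [CommRing S]
    [Algebra B S] [Algebra.IsStandardEtale B S]
    (hc : ∀ b, Continuous fun w => c w b) (e : S →+* ℝ) (he : e.comp (algebraMap B S) = c w₀) :
    ∀ᶠ w in 𝓝 w₀, ∃ e' : S →+* ℝ, e'.comp (algebraMap B S) = c w := by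
  obtain ⟨P⟩ := Algebra.IsStandardEtale.nonempty_standardEtalePresentation (R := B) (S := S)
  have hcont := continuous_eval₂_of_forall_continuous hc
  set u₀ := e P.x
  have hroot : P.f.eval₂ (c w₀) u₀ = 0 ∧ P.f.derivative.eval₂ (c w₀) u₀ ≠ 0 ∧
      P.g.eval₂ (c w₀) u₀ ≠ 0 := by
    let _ := (c w₀).toAlgebra
    have hmap : P.HasMap u₀ := P.hasMap.map (AlgHom.mk e (DFunLike.congr_fun he))
    exact ⟨hmap.1, hmap.isUnit_derivative_f.ne_zero, hmap.2.ne_zero⟩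
  obtain ⟨hf, hf', hg⟩ := hroot
  have hderiv : HasDerivAt (fun u => P.f.eval₂ (c w₀) u) (P.f.derivative.eval₂ (c w₀) u₀) u₀ := by
    simpa only [Polynomial.eval₂_eq_eval_map, Polynomial.derivative_map] using
      (P.f.map (c w₀)).hasDerivAt u₀
  have hgnear : ∀ᶠ q in 𝓝 w₀ ×ˢ 𝓝 u₀, P.g.eval₂ (c q.1) q.2 ≠ 0 :=
    nhds_prod_eq (x := w₀) (y := u₀) ▸ (hcont P.g).continuousAt.eventually_ne hg
  obtain ⟨pW, hpW, pN, hpN, hpg⟩ := Filter.eventually_prod_iff.1 hgnear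
  filter_upwards [hpW, eventually_exists_eq_zero_of_hasDerivAt
    (F := fun w u => P.f.eval₂ (c w) u) (fun w => (hcont P.f).comp (.prodMk_right w))
    (fun u => (hcont P.f).comp (.prodMk_left u)) hderiv hf' hf hpN] with w hw ⟨u, hu, hfu⟩
  let _ := (c w).toAlgebra
  have hmap : P.HasMap u := ⟨hfu, (hpg hw hu).isUnit⟩
  let lift : S →ₐ[B] ℝ := (P.lift u hmap).comp P.equivRing.toAlgHom
  exact ⟨lift, lift.comp_algebraMap⟩

theorem exists_ne_zero_eventually_exists_comp_algebraMap_eq (A : Type*) [CommRing A] [IsDomain A]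
    [IsDomain B] [CharZero B] [Algebra B A] [FaithfulSMul B A] [Algebra.FinitePresentation B A]
    (hc : ∀ b, Continuous fun w => c w b) :
    ∃ h : A, h ≠ 0 ∧ ∀ w₀, ∀ e : A →+* ℝ, e h ≠ 0 → e.comp (algebraMap B A) = c w₀ →
      ∀ᶠ w in 𝓝 w₀, ∃ e' : A →+* ℝ, e'.comp (algebraMap B A) = c w := by
  have := isSmoothAt_bot B A
  obtain ⟨h, hh, m, _, _, _⟩ :=
    Algebra.IsSmoothAt.exists_isStandardEtale_mvPolynomial (R := B) (p := (⊥ : Ideal A))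
  refine ⟨h, hh, fun w₀ e heh he => ?_⟩
  let loc : Localization.Away h →+* ℝ := IsLocalization.Away.lift h heh.isUnit
  have hloc : loc.comp (algebraMap A (Localization.Away h)) = e :=
    IsLocalization.Away.lift_comp h heh.isUnit
  -- Only `c` varies with `w`: the free variables keep their values at `e`.
  let s : Fin m → ℝ := fun i => loc (algebraMap (MvPolynomial (Fin m) B) _ (X i))
  let c' : W → MvPolynomial (Fin m) B →+* ℝ := fun w => eval₂Hom (c w) s
  have hc' : ∀ p, Continuous fun w => c' w p := fun p => by
    simp only [c', coe_eval₂Hom, eval₂_eq]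
    exact continuous_finsetSum _ fun d _ => (hc _).mul continuous_const
  have htower (b : B) : algebraMap A (Localization.Away h) (algebraMap B A b) =
      algebraMap (MvPolynomial (Fin m) B) _ (C b) := by
    rw [← algebraMap_eq, ← IsScalarTower.algebraMap_apply, ← IsScalarTower.algebraMap_apply]
  have hloc_c' : loc.comp (algebraMap (MvPolynomial (Fin m) B) _) = c' w₀ := by
    refine MvPolynomial.ringHom_ext (fun b => ?_) fun i => (eval₂Hom_X' (c w₀) s i).symm
    rw [RingHom.comp_apply, ← htower, ← RingHom.comp_apply, hloc, coe_eval₂Hom, eval₂_C, ← he,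
      RingHom.comp_apply]
  filter_upwards [eventually_exists_comp_algebraMap_eq_of_isStandardEtale hc' loc hloc_c']
    with w ⟨e', he'⟩
  refine ⟨e'.comp (algebraMap A _), RingHom.ext fun b => ?_⟩
  rw [RingHom.comp_apply, RingHom.comp_apply, htower, ← RingHom.comp_apply, he', coe_eval₂Hom,
    eval₂_C]

end Lifting

theorem ringHom_eq_eval {σ : Type*} (φ : MvPolynomial σ ℝ →+* ℝ) :
    φ = eval fun i => φ (X i) := by
  refine MvPolynomial.ringHom_ext (fun a => ?_) fun i => (eval_X (f := fun i => φ (X i)) i).symm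
  rw [eval_C]
  exact DFunLike.congr_fun (Subsingleton.elim (φ.comp C) (RingHom.id ℝ)) a

theorem exists_notMem_forall_image_polyMap_mem_nhds {σ τ : Type*} [Finite σ] [Finite τ]
    (P : Ideal (MvPolynomial σ ℝ)) [P.IsPrime] {f : τ → MvPolynomial σ ℝ}
    (hf : P.comap (bind₁ f) = ⊥) :
    ∃ h ∉ P, ∀ y ∈ zeroLocus ℝ P, eval y h ≠ 0 →
      polyMap f '' zeroLocus ℝ P ∈ 𝓝 (polyMap f y) := by
  let A := MvPolynomial σ ℝ ⧸ P
  let φ : MvPolynomial τ ℝ →ₐ[ℝ] A := (Ideal.Quotient.mkₐ ℝ P).comp (bind₁ f)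
  let _ : Algebra (MvPolynomial τ ℝ) A := φ.toRingHom.toAlgebra
  have : IsScalarTower ℝ (MvPolynomial τ ℝ) A := .of_algebraMap_eq fun a => (φ.commutes a).symm
  have : FaithfulSMul (MvPolynomial τ ℝ) A := by
    rw [faithfulSMul_iff_algebraMap_injective, injective_iff_map_eq_zero]
    exact fun p hp => Ideal.mem_bot.1 (hf.le (Ideal.Quotient.eq_zero_iff_mem (I := P).1 hp))
  have : Algebra.FinitePresentation ℝ A := Algebra.FinitePresentation.of_finiteType.1 inferInstance
  have : Algebra.FinitePresentation (MvPolynomial τ ℝ) A :=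
    .of_restrict_scalars_finitePresentation ℝ _ A
  obtain ⟨h, hh, hlift⟩ := exists_ne_zero_eventually_exists_comp_algebraMap_eq (W := τ → ℝ)
    (c := eval) A MvPolynomial.continuous_eval
  obtain ⟨h, rfl⟩ := Ideal.Quotient.mk_surjective h
  refine ⟨h, fun hP => hh (Ideal.Quotient.eq_zero_iff_mem.2 hP), fun y hy hyh => ?_⟩
  let e : A →+* ℝ := Ideal.Quotient.lift P (eval y) hy
  have he : e.comp (algebraMap (MvPolynomial τ ℝ) A) = eval (polyMap f y) :=
    RingHom.ext fun p => (eval_polyMap f y p).symm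
  filter_upwards [hlift _ e hyh he] with w ⟨e', he'⟩
  let x : σ → ℝ := fun i => e' (Ideal.Quotient.mk P (X i))
  have hx (p : MvPolynomial σ ℝ) : eval x p = e' (Ideal.Quotient.mk P p) :=
    (DFunLike.congr_fun (ringHom_eq_eval (e'.comp (Ideal.Quotient.mk P))) p).symm
  refine ⟨x, fun p hp => ?_, funext fun a => ?_⟩
  · exact (hx p).trans (by rw [Ideal.Quotient.eq_zero_iff_mem.2 hp, map_zero])
  · calc
      eval x (f a) = e' (algebraMap (MvPolynomial τ ℝ) A (X a)) := by
        rw [hx, ← bind₁_X_right (R := ℝ) f a]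
        rfl
      _ = w a := by rw [← RingHom.comp_apply, he', eval_X]

theorem IsZClosed.interior_image_polyMap_nonempty {σ τ : Type*} [Finite σ] [Finite τ]
    {Y : Set (σ → ℝ)} (hY : IsZClosed Y) {f : τ → MvPolynomial σ ℝ}
    (hdense : IsZDense (polyMap f '' Y)) : (interior (polyMap f '' Y)).Nonempty := by
  have hbot : ⊥ ∈ ((vanishingIdeal ℝ Y).comap (bind₁ f)).minimalPrimes := by
    rw [comap_vanishingIdeal, hdense.vanishingIdeal_eq_bot,
      Ideal.minimalPrimes_eq_subsingleton_self]
    exact Set.mem_singleton ⊥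
  obtain ⟨P, hP, hPf⟩ := Ideal.exists_minimalPrimes_comap_eq (bind₁ f).toRingHom ⊥ hbot
  have : P.IsPrime := hP.1.1
  obtain ⟨h, hh, hnhds⟩ := exists_notMem_forall_image_polyMap_mem_nhds P hPf
  rw [← vanishingIdeal_inter_zeroLocus hP, mem_vanishingIdeal_iff] at hh
  push Not at hh
  obtain ⟨y, ⟨-, hyP⟩, hyh⟩ := hh
  have hPY : zeroLocus ℝ P ⊆ Y := by
    rw [← hY.zeroLocus_vanishingIdeal]
    exact zeroLocus_anti_mono hP.1.2
  exact ⟨polyMap f y, mem_interior_iff_mem_nhds.2 <|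
    Filter.mem_of_superset (hnhds y hyP hyh) (Set.image_mono hPY)⟩

theorem IsZClosed.interior_sumsOf_nonempty {σ : Type*} [Finite σ] {S : Set (σ → ℝ)}
    (hS : IsZClosed S) {r : ℕ} (hr : IsZDense (sumsOf S r)) : (interior (sumsOf S r)).Nonempty := by
  let f : σ → MvPolynomial (Fin r × σ) ℝ := fun k => ∑ i, X (i, k)
  let g : Fin r → σ → MvPolynomial (Fin r × σ) ℝ := fun i k => X (i, k)
  have hf (y : Fin r → σ → ℝ) : polyMap f (Function.uncurry y) = ∑ i, y i := by
    ext k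
    simp [polyMap, f]
  have hg (y : Fin r → σ → ℝ) (i : Fin r) : polyMap (g i) (Function.uncurry y) = y i := by
    ext k
    simp [polyMap, g]
  have himage : sumsOf S r = polyMap f '' ⋂ i, polyMap (g i) ⁻¹' S := by
    ext v
    simp only [sumsOf, Set.mem_image, Set.mem_iInter, Set.mem_preimage]
    refine (Equiv.curry (Fin r) σ ℝ).symm.exists_congr fun y => ?_
    simp only [Equiv.curry_symm_apply, hf, hg]
  rw [himage] at hr ⊢
  exact (IsZClosed.iInter fun i => hS.preimage_polyMap (g i)).interior_image_polyMap_nonempty hr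

section Rank

variable {n : ℕ} {XR : Set (Fin (n + 1) → ℝ)}

theorem isTypicalRank_of_isLeast (hXR : IsZClosed XR) {k : ℕ}
    (hk : IsLeast {r | IsZDense (sumsOf XR r)} k) : IsTypicalRank XR k := by
  let V : Fin k → Set (Fin (n + 1) → ℝ) := fun l => (zClosure (sumsOf XR l))ᶜ
  have hVopen : ∀ l, IsOpen (V l) := fun l => (isZClosed_zClosure _).isClosed.isOpen_compl
  have hVdense : Dense (⋂ l, V l) := dense_iInter_of_isOpen hVopen fun l =>
    (isZClosed_zClosure _).dense_compl fun h =>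
      l.2.not_ge (hk.2 (isZDense_iff_zClosure_eq_univ.2 h))
  refine ⟨interior (sumsOf XR k) ∩ ⋂ l, V l, isOpen_interior.inter (isOpen_iInter_of_finite hVopen),
    hVdense.inter_open_nonempty _ isOpen_interior (hXR.interior_sumsOf_nonempty hk.1),
    fun v ⟨hvk, hvV⟩ => xRank_eq_natCast_iff.2 ⟨interior_subset (s := sumsOf XR k) hvk, ?_⟩⟩
  intro l hl
  by_contra! hlk
  exact Set.mem_iInter.1 hvV ⟨l, hlk⟩ (subset_zClosure _ hl)

theorem exists_le_isTypicalRank (hXR : IsZClosed XR) {r : ℕ} (hr : IsZDense (sumsOf XR r)) :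
    ∃ k ≤ r, IsTypicalRank XR k := by
  have hleast := isLeast_csInf (s := {r | IsZDense (sumsOf XR r)}) ⟨r, hr⟩
  exact ⟨_, hleast.2 hr, isTypicalRank_of_isLeast hXR hleast⟩

variable {K : Type*} [CommRing K] [IsDomain K] {c : ℝ →+* K} {XK : Set (Fin (n + 1) → K)}

theorem IsTypicalRank.genericRank_le {r s : ℕ} (hr : IsTypicalRank XR r)
    (hsub : c.compLeft _ '' XR ⊆ XK) {V : Set (Fin (n + 1) → K)} (hV : IsZOpen V)
    (hVne : V.Nonempty) (hVs : ∀ v ∈ V, xRank XK v = s) : s ≤ r := by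
  obtain ⟨U, hU, hUne, hUr⟩ := hr
  obtain ⟨_, ⟨v, hvU, rfl⟩, hv⟩ :=
    (isZDense_image_compLeft_of_isOpen c hU hUne).inter_nonempty_of_isZOpen hV hVne
  have hvr : c.compLeft _ v ∈ sumsOf (c.compLeft _ '' XR) r := by
    rw [← image_compLeft_sumsOf]
    exact Set.mem_image_of_mem _ (xRank_eq_natCast_iff.1 (hUr v hvU)).1
  exact (xRank_eq_natCast_iff.1 (hVs _ hv)).2 (sumsOf_mono hsub r hvr)

end Rank

theorem stmt_1_general {n : ℕ} {K : Type*} [CommRing K] [IsDomain K] (c : ℝ →+* K)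
    {XR : Set (Fin (n + 1) → ℝ)} {XK : Set (Fin (n + 1) → K)} (hXR : IsZClosed XR)
    (hsub : c.compLeft _ '' XR ⊆ XK) (hdense : XK ⊆ zClosure (c.compLeft _ '' XR))
    {r0 : ℕ} (hr0 : IsLeast {r | IsTypicalRank XR r} r0) {rgen : ℕ}
    (hgen : ∃ U : Set (Fin (n + 1) → K), IsZOpen U ∧ IsZDense U ∧ ∀ v ∈ U, xRank XK v = rgen) :
    r0 = rgen := by
  obtain ⟨U, hU, hUdense, hUrank⟩ := hgen
  refine le_antisymm ?_ (hr0.1.genericRank_le hsub hU hUdense.nonempty hUrank)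
  have hXK : IsZDense (sumsOf XK rgen) :=
    hUdense.mono fun v hv => (xRank_eq_natCast_iff.1 (hUrank v hv)).1
  have himage : IsZDense (c.compLeft _ '' sumsOf XR rgen) := by
    rw [image_compLeft_sumsOf]
    exact hXK.sumsOf_of_subset_zClosure hdense
  obtain ⟨k, hk, hktyp⟩ := exists_le_isTypicalRank hXR (himage.of_image_compLeft c.injective)
  exact (hr0.2 hktyp).trans hk

/-- Theorem 2 of the paper. For a real irreducible nondegenerate
projective variety with Zariski-dense real points, the minimum typical rank equals the
generic rank of the complexification. -/
theorem stmt_1 {n : ℕ} (I : Set (MvPolynomial (Fin (n + 1)) ℝ))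
    (XhatR : Set (Fin (n + 1) → ℝ)) (XhatC : Set (Fin (n + 1) → ℂ))
    (hXR : XhatR = zLocus I)
    (hXC : XhatC = zLocus (⇑(MvPolynomial.map (algebraMap ℝ ℂ)) '' I))
    (hcone : IsCone XhatR) (hirr : IsZIrreducible XhatR)
    (hnondeg : Submodule.span ℝ XhatR = ⊤)
    (hdense : ∀ C : Set (Fin (n + 1) → ℂ), IsZClosed C →
      (fun x : Fin (n + 1) → ℝ => fun i => (x i : ℂ)) '' XhatR ⊆ C → XhatC ⊆ C)
    (r0 : ℕ) (hr0 : IsLeast {r : ℕ | IsTypicalRank XhatR r} r0)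
    (rgen : ℕ)
    (hgen : ∃ U : Set (Fin (n + 1) → ℂ), IsZOpen U ∧ IsZDense U ∧
      ∀ v ∈ U, xRank XhatC v = (rgen : ℕ∞)) :
    r0 = rgen := by
  subst hXR hXC
  exact stmt_1_general (algebraMap ℝ ℂ) ⟨I, rfl⟩
    (Set.image_subset_iff.2 (preimage_compLeft_zLocus_map (algebraMap ℝ ℂ).injective I).ge)
    (Set.subset_sInter fun C hC => hdense C hC.1 hC.2) hr0 hgen
end

section
/- Let X ⊆ ℙⁿ(ℝ) be an irreducible nondegenerate real projective variety whose real points are Zariski dense. Let r₀ be the minimum typical rank with respect to X and let r_max be the maximum value of X-rank over nonzero vectors of ℝ^{n+1}. Then r_max ≤ 2·r₀. -/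
open MvPolynomial

/-!
Rank is subadditive and, on a cone, does not increase under scaling. If `u` is interior to the set
of vectors of rank at most `r`, then for any `v` the vector `u + c • v` also has rank at most `r`
for some `c ≠ 0`. Since `v = c⁻¹ • (u + c • v) + (-c⁻¹) • u`, the rank of `v` is at most `r + r`.
-/

open Topology

section XRank

variable {F σ : Type*} [CommSemiring F] {S : Set (σ → F)} {v w : σ → F} {r s : ℕ}

lemma smul_mem_sumsOf (hS : IsCone S) (c : F) (hv : v ∈ sumsOf S r) : c • v ∈ sumsOf S r := by
  obtain ⟨f, hf, rfl⟩ := hv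
  exact ⟨fun i => c • f i, fun i => hS c _ (hf i), Finset.smul_sum.symm⟩

lemma add_mem_sumsOf (hv : v ∈ sumsOf S r) (hw : w ∈ sumsOf S s) :
    v + w ∈ sumsOf S (r + s) := by
  obtain ⟨f, hf, rfl⟩ := hv
  obtain ⟨g, hg, rfl⟩ := hw
  refine ⟨Fin.append f g, fun i => ?_, by simp [Fin.sum_univ_add]⟩
  induction i using Fin.addCases with
  | left i => simpa using hf i
  | right i => simpa using hg i

lemma xRank_le_of_mem_sumsOf (hv : v ∈ sumsOf S r) : xRank S v ≤ r :=
  sInf_le ⟨r, rfl, hv⟩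

lemma mem_sumsOf_of_xRank_eq (hv : xRank S v = r) : v ∈ sumsOf S r := by
  have hne : {t : ℕ∞ | ∃ s : ℕ, t = s ∧ v ∈ sumsOf S s}.Nonempty :=
    Set.nonempty_iff_ne_empty.mpr fun hempty => by simp [xRank, hempty] at hv
  -- `ℕ∞` is well ordered, so the infimum defining the rank is attained.
  obtain ⟨s, hs, hmem⟩ := csInf_mem hne
  obtain rfl : r = s := by exact_mod_cast hv.symm.trans hs
  exact hmem

lemma xRank_smul_le (hS : IsCone S) (c : F) (v : σ → F) : xRank S (c • v) ≤ xRank S v :=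
  sInf_le_sInf fun _ ⟨s, hs, hv⟩ => ⟨s, hs, smul_mem_sumsOf hS c hv⟩

lemma xRank_add_le (S : Set (σ → F)) (v w : σ → F) :
    xRank S (v + w) ≤ xRank S v + xRank S w := by
  cases hv : xRank S v with
  | top => simp
  | coe r =>
    cases hw : xRank S w with
    | top => simp
    | coe s =>
      exact_mod_cast xRank_le_of_mem_sumsOf
        (add_mem_sumsOf (mem_sumsOf_of_xRank_eq hv) (mem_sumsOf_of_xRank_eq hw))

end XRank

lemma exists_ne_zero_add_smul_mem (𝕜 : Type*) {E : Type*} [Zero 𝕜] [TopologicalSpace 𝕜]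
    [(𝓝[≠] (0 : 𝕜)).NeBot] [AddMonoid E] [SMulWithZero 𝕜 E] [TopologicalSpace E]
    [ContinuousAdd E] [ContinuousSMul 𝕜 E] {U : Set E} {u : E} (hU : U ∈ 𝓝 u) (v : E) :
    ∃ c : 𝕜, c ≠ 0 ∧ u + c • v ∈ U := by
  have hcont : Continuous fun c : 𝕜 => u + c • v := by fun_prop
  have hnear : ∀ᶠ c : 𝕜 in 𝓝 0, u + c • v ∈ U :=
    hcont.continuousAt.eventually_mem (by simpa using hU)
  have hne : ∀ᶠ c : 𝕜 in 𝓝[≠] 0, c ≠ 0 := eventually_mem_nhdsWithin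
  exact (hne.and (hnear.filter_mono nhdsWithin_le_nhds)).exists

lemma IsTypicalRank.nonempty_interior {n : ℕ} {S : Set (Fin (n + 1) → ℝ)} {r : ℕ}
    (hr : IsTypicalRank S r) : (interior {v | xRank S v ≤ r}).Nonempty := by
  obtain ⟨U, hU, hne, hrank⟩ := hr
  exact hne.mono (interior_maximal (fun v hv => (hrank v hv).le) hU)

theorem stmt_2_general {𝕜 σ : Type*} [Field 𝕜] [TopologicalSpace 𝕜] [ContinuousAdd 𝕜]
    [ContinuousMul 𝕜] [(𝓝[≠] (0 : 𝕜)).NeBot] {S : Set (σ → 𝕜)} (hS : IsCone S) {r : ℕ∞}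
    (hr : (interior {v | xRank S v ≤ r}).Nonempty) (v : σ → 𝕜) : xRank S v ≤ 2 * r := by
  obtain ⟨u, hu⟩ := hr
  have hru : xRank S u ≤ r := interior_subset (s := {v | xRank S v ≤ r}) hu
  obtain ⟨c, hc, hcv⟩ := exists_ne_zero_add_smul_mem 𝕜 (mem_interior_iff_mem_nhds.mp hu) v
  have hv : v = c⁻¹ • (u + c • v) + (-c⁻¹) • u := by
    rw [smul_add, inv_smul_smul₀ hc, neg_smul]
    abel
  calc
    xRank S v = xRank S (c⁻¹ • (u + c • v) + (-c⁻¹) • u) := congrArg (xRank S) hv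
    _ ≤ xRank S (c⁻¹ • (u + c • v)) + xRank S ((-c⁻¹) • u) := xRank_add_le S _ _
    _ ≤ xRank S (u + c • v) + xRank S u :=
      add_le_add (xRank_smul_le hS _ _) (xRank_smul_le hS _ _)
    _ ≤ r + r := add_le_add hcv hru
    _ = 2 * r := (two_mul r).symm

/-- Theorem 3 of the paper. For a real irreducible nondegenerate
projective variety with Zariski-dense real points, the maximum real rank is at most
twice the minimum typical rank. -/
theorem stmt_2 {n : ℕ} (I : Set (MvPolynomial (Fin (n + 1)) ℝ))
    (XhatR : Set (Fin (n + 1) → ℝ)) (XhatC : Set (Fin (n + 1) → ℂ))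
    (hXR : XhatR = zLocus I)
    (hXC : XhatC = zLocus (⇑(MvPolynomial.map (algebraMap ℝ ℂ)) '' I))
    (hcone : IsCone XhatR) (hirr : IsZIrreducible XhatR)
    (hnondeg : Submodule.span ℝ XhatR = ⊤)
    (hdense : ∀ C : Set (Fin (n + 1) → ℂ), IsZClosed C →
      (fun x : Fin (n + 1) → ℝ => fun i => (x i : ℂ)) '' XhatR ⊆ C → XhatC ⊆ C)
    (r0 : ℕ) (hr0 : IsLeast {r : ℕ | IsTypicalRank XhatR r} r0)
    (rmax : ℕ∞)
    (hmax : IsGreatest {r : ℕ∞ | ∃ v : Fin (n + 1) → ℝ, v ≠ 0 ∧ xRank XhatR v = r} rmax) :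
    rmax ≤ 2 * (r0 : ℕ∞) := by
  obtain ⟨⟨v, -, rfl⟩, -⟩ := hmax
  exact stmt_2_general hcone hr0.1.nonempty_interior v
end
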